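/- For every positive integer k and every x ≥ 0, the power series Σ_{n=0}^∞ ((-1)^n ℓ_{n,k}/n!) x^n converges (it has infinite radius of convergence) and φ_k(x) = e^{-x} Σ_{n=0}^∞ ((-1)^n ℓ_{n,k}/n!) x^n; in particular, the sequence (ℓ_{n,k})_{n≥0} converges to 0 in the Borel sense. -/

import Mathlib

open scoped Real Topology
open Complex Filter MeasureTheory Finset Asymptotics

/-- The analytic extension of `s ↦ ((s-1) * ζ(s))^k` to `s = 1` (where its value is `1`). -/
noncomputable def zetaPowAux (k : ℕ) : ℂ → ℂ :=
  Function.update (fun s : ℂ => ((s - 1) * riemannZeta s) ^ k) 1 1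

/-- `lam k j` is the Taylor coefficient `λ_{j,k}`, i.e. the `j`-th derivative at `s = 1` of the
analytic extension of `(s-1)^k ζ(s)^k`; these numbers are real, and we record their real part. -/
noncomputable def lam (k j : ℕ) : ℝ :=
  (iteratedDeriv j (zetaPowAux k) 1).re

/-- The Fourier coefficients `ℓ_{n,k}` for `n ≥ -k` (an integer index). -/
noncomputable def ell (k : ℕ) (n : ℤ) : ℝ :=
  if 1 ≤ n then
    (-1 : ℝ) ^ n.toNat *
      ∑ j ∈ Finset.Icc 1 n.toNat,
        ((n.toNat - 1).choose (j - 1) : ℝ) * lam k (j + k) / (Nat.factorial (j + k))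
  else
    (-1 : ℝ) ^ k *
      ∑ j ∈ Finset.range ((k + n).toNat + 1),
        ((k - j).choose (-n).toNat : ℝ) * (-1 : ℝ) ^ j * lam k j / (Nat.factorial j)

/-- The Lindelöf Hypothesis: `ζ(1/2 + it) = O(|t|^ε)` for every `ε > 0`. -/
def LindelofHypothesis : Prop :=
  ∀ ε : ℝ, 0 < ε → ∃ C : ℝ, ∀ t : ℝ, 1 ≤ |t| →
    ‖riemannZeta (1 / 2 + t * Complex.I)‖ ≤ C * |t| ^ ε

/-- `dk k n` is the Piltz divisor function `d_k(n)`: the number of representations of `n` as an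
ordered product of `k` positive integers (the `k`-th Dirichlet-convolution power of `ζ`). -/
noncomputable def dk (k n : ℕ) : ℕ := (ArithmeticFunction.zeta ^ k) n

/-- The coefficients `a_{j,k}` of the polynomial `P_k`. -/
noncomputable def aCoef (k j : ℕ) : ℝ :=
  (-1 : ℝ) ^ (k - 1 - j) *
    ∑ i ∈ Finset.range (k - 1 - j + 1), (-1 : ℝ) ^ i * lam k i / (Nat.factorial i)

/-- The error term `Δ_k(x) = (Σ_{1 ≤ n ≤ x} d_k(n)) - x P_k(log x)` in the Piltz divisor
problem. -/
noncomputable def Deltak (k : ℕ) (x : ℝ) : ℝ :=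
  (∑ n ∈ Finset.Icc 1 ⌊x⌋₊, (dk k n : ℝ)) -
    x * ∑ j ∈ Finset.range k, aCoef k j / (Nat.factorial j) * (Real.log x) ^ j

/-- The `n`-th Laguerre polynomial. -/
noncomputable def laguerre (n : ℕ) (u : ℝ) : ℝ :=
  ∑ j ∈ Finset.range (n + 1), (n.choose j : ℝ) * (-1 : ℝ) ^ j * u ^ j / (Nat.factorial j)

/-- The Bessel function of the first kind of order `0`. -/
noncomputable def besselJ0 (u : ℝ) : ℝ :=
  ∑' m : ℕ, (-1 : ℝ) ^ m * (u / 2) ^ (2 * m) / ((Nat.factorial m : ℝ) ^ 2)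

/-- `φ_k(x) = ∫_1^∞ Δ_k(r) J₀(2 √(x log r)) r⁻² dr`. -/
noncomputable def phik (k : ℕ) (x : ℝ) : ℝ :=
  ∫ r in Set.Ioi (1 : ℝ), Deltak k r * besselJ0 (2 * Real.sqrt (x * Real.log r)) / r ^ 2

/-!
Substituting `r = eᵗ` gives `φ_k(x) = ∫₀^∞ e⁻ᵗ Δ_k(eᵗ) J₀(2√(xt)) dt`. By the hyperbola method,
`e⁻ᵗ ∑_{n ≤ eᵗ} d_k(n)` is a polynomial in `t` up to an exponentially small error, hence so is
`e⁻ᵗ Δ_k(eᵗ)`. Its Laplace transform at `w` is the part of nonnegative degree of the Laurent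
expansion of `ζ(1 + w)ᵏ / (1 + w)`: it stays bounded as `w → 0⁺`, which forces the polynomial to
vanish, and its Taylor coefficients are the moments of `e⁻ᵗ Δ_k(eᵗ)` up to factorials. Integrating
the series of `J₀` term by term therefore yields an exponential generating function for `φ_k`, and
multiplying it by `eˣ` applies the binomial transform, which produces `(-1)ⁿ ℓ_{n,k}` by Pascal's
rule. Finally `J₀(u) = π⁻¹ ∫₀^π cos (u cos θ) dθ` tends to `0` by the Riemann–Lebesgue lemma, so
`φ_k(x) → 0` by dominated convergence.
-/

open scoped ArithmeticFunction.zeta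

/-! ### Exponential decay and polynomial asymptotics -/

/-- `f` decays exponentially on `[0, ∞)`. The filter `𝓟 (Set.Ici 0)` makes the implied constant
uniform on the whole half-line rather than only near `∞`. -/
def ExpDecay (f : ℝ → ℝ) : Prop :=
  ∃ δ > 0, f =O[𝓟 (Set.Ici 0)] fun t => Real.exp (-δ * t)

/-- `f` agrees on `[0, ∞)` with a polynomial up to an exponentially decaying error. -/
def AsympPoly (f : ℝ → ℝ) : Prop :=
  ∃ p : Polynomial ℝ, ExpDecay fun t => f t - p.eval t

theorem isBigO_exp_neg_mul_of_le {δ δ' : ℝ} (h : δ ≤ δ') :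
    (fun t : ℝ => Real.exp (-δ' * t)) =O[𝓟 (Set.Ici 0)] fun t => Real.exp (-δ * t) := by
  refine isBigO_principal.2 ⟨1, fun t (ht : 0 ≤ t) => ?_⟩
  simp only [Real.norm_eq_abs, Real.abs_exp, one_mul]
  gcongr

theorem isBigO_pow_exp_mul {ε : ℝ} (hε : 0 < ε) (n : ℕ) :
    (fun t : ℝ => t ^ n) =O[𝓟 (Set.Ici 0)] fun t => Real.exp (ε * t) := by
  refine isBigO_principal.2 ⟨n.factorial / ε ^ n, fun t (ht : 0 ≤ t) => ?_⟩
  have h := Real.pow_div_factorial_le_exp (x := ε * t) (by positivity) n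
  rw [Real.norm_of_nonneg (by positivity), Real.norm_of_nonneg (by positivity), div_mul_eq_mul_div,
    le_div_iff₀ (by positivity), mul_comm (t ^ n), ← mul_pow]
  rwa [div_le_iff₀' (by positivity)] at h

theorem isBigO_eval_exp_mul {ε : ℝ} (hε : 0 < ε) (p : Polynomial ℝ) :
    (fun t => p.eval t) =O[𝓟 (Set.Ici 0)] fun t => Real.exp (ε * t) := by
  simp only [Polynomial.eval_eq_sum_range]
  exact IsBigO.fun_sum fun n _ => (isBigO_pow_exp_mul hε n).const_mul_left _

section

variable {f g : ℝ → ℝ}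

theorem ExpDecay.of_isBigO (hg : ExpDecay g) (h : f =O[𝓟 (Set.Ici 0)] g) :
    ExpDecay f :=
  let ⟨δ, hδ, hg⟩ := hg
  ⟨δ, hδ, h.trans hg⟩

theorem ExpDecay.congr (hf : ExpDecay f) (h : ∀ t, 0 ≤ t → g t = f t) :
    ExpDecay g :=
  hf.of_isBigO (Set.EqOn.eventuallyEq (s := Set.Ici 0) h).isBigO

theorem expDecay_zero : ExpDecay fun _ => 0 := ⟨1, one_pos, isBigO_zero _ _⟩

theorem expDecay_exp_neg_mul {δ : ℝ} (hδ : 0 < δ) : ExpDecay fun t => Real.exp (-δ * t) :=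
  ⟨δ, hδ, isBigO_refl _ _⟩

theorem ExpDecay.add (hf : ExpDecay f) (hg : ExpDecay g) :
    ExpDecay fun t => f t + g t := by
  obtain ⟨δ, hδ, hf⟩ := hf
  obtain ⟨δ', hδ', hg⟩ := hg
  exact ⟨min δ δ', lt_min hδ hδ', (hf.trans (isBigO_exp_neg_mul_of_le (min_le_left _ _))).add
    (hg.trans (isBigO_exp_neg_mul_of_le (min_le_right _ _)))⟩

theorem ExpDecay.mul_eval (hf : ExpDecay f) (p : Polynomial ℝ) :
    ExpDecay fun t => f t * p.eval t := by
  obtain ⟨δ, hδ, hf⟩ := hf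
  refine ⟨δ / 2, half_pos hδ,
    (hf.mul (isBigO_eval_exp_mul (half_pos hδ) p)).congr_right fun t => ?_⟩
  rw [← Real.exp_add]
  ring_nf

theorem ExpDecay.mul_pow (hf : ExpDecay f) (n : ℕ) : ExpDecay fun t => f t * t ^ n := by
  simpa using hf.mul_eval (Polynomial.X ^ n)

theorem ExpDecay.mul (hf : ExpDecay f) (hg : ExpDecay g) :
    ExpDecay fun t => f t * g t := by
  obtain ⟨δ, hδ, hf⟩ := hf
  obtain ⟨δ', hδ', hg⟩ := hg
  refine ⟨δ + δ', add_pos hδ hδ', (hf.mul hg).congr_right fun t => ?_⟩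
  rw [← Real.exp_add]
  ring_nf

theorem ExpDecay.comp_div (hf : ExpDecay f) {a : ℝ} (ha : 0 < a) :
    ExpDecay fun t => f (t / a) := by
  obtain ⟨δ, hδ, hf⟩ := hf
  obtain ⟨C, hC⟩ := isBigO_principal.1 hf
  refine ⟨δ / a, div_pos hδ ha, isBigO_principal.2 ⟨C, fun t (ht : 0 ≤ t) => ?_⟩⟩
  exact (hC (t / a) (div_nonneg ht ha.le)).trans_eq (by ring_nf)

theorem ExpDecay.asympPoly (hf : ExpDecay f) : AsympPoly f := ⟨0, by simpa using hf⟩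

theorem asympPoly_eval (p : Polynomial ℝ) : AsympPoly fun t => p.eval t :=
  ⟨p, expDecay_zero.congr fun _ _ => sub_self _⟩

theorem AsympPoly.congr (hf : AsympPoly f) (h : ∀ t, 0 ≤ t → g t = f t) :
    AsympPoly g := by
  obtain ⟨p, hp⟩ := hf
  exact ⟨p, hp.congr fun t ht => by rw [h t ht]⟩

theorem AsympPoly.add (hf : AsympPoly f) (hg : AsympPoly g) :
    AsympPoly fun t => f t + g t := by
  obtain ⟨p, hp⟩ := hf
  obtain ⟨q, hq⟩ := hg
  exact ⟨p + q, (hp.add hq).congr fun t _ => by rw [Polynomial.eval_add]; ring⟩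

theorem ExpDecay.mul_asympPoly (hf : ExpDecay f) (hg : AsympPoly g) :
    ExpDecay fun t => f t * g t := by
  obtain ⟨q, hq⟩ := hg
  exact ((hf.mul hq).add (hf.mul_eval q)).congr fun t _ => by ring

theorem AsympPoly.mul (hf : AsympPoly f) (hg : AsympPoly g) :
    AsympPoly fun t => f t * g t := by
  obtain ⟨p, hp⟩ := hf
  have ⟨q, hq⟩ := hg
  exact ⟨p * q, ((hp.mul_asympPoly hg).add (hq.mul_eval p)).congr
    fun t _ => by rw [Polynomial.eval_mul]; ring⟩

theorem AsympPoly.sub (hf : AsympPoly f) (hg : AsympPoly g) :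
    AsympPoly fun t => f t - g t :=
  (hf.add ((asympPoly_eval (-1)).mul hg)).congr fun t _ => by simp [sub_eq_add_neg]

theorem AsympPoly.sum {ι : Type*} (s : Finset ι) {f : ι → ℝ → ℝ}
    (hf : ∀ i ∈ s, AsympPoly (f i)) : AsympPoly fun t => ∑ i ∈ s, f i t := by
  classical
  induction s using Finset.induction_on with
  | empty => simpa using expDecay_zero.asympPoly
  | insert a s ha ih =>
    simp only [sum_insert ha]
    exact (hf a (mem_insert_self a s)).add (ih fun i hi => hf i (mem_insert_of_mem hi))

theorem AsympPoly.comp_div (hf : AsympPoly f) {a : ℝ} (ha : 0 < a) :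
    AsympPoly fun t => f (t / a) := by
  obtain ⟨p, hp⟩ := hf
  refine ⟨p.comp (Polynomial.C a⁻¹ * Polynomial.X), (hp.comp_div ha).congr fun t _ => ?_⟩
  simp [div_eq_inv_mul]

theorem ExpDecay.integrableOn_Ioi (hf : ExpDecay f) (hm : Measurable f) :
    IntegrableOn f (Set.Ioi 0) := by
  obtain ⟨δ, hδ, hf⟩ := hf
  obtain ⟨C, hC⟩ := isBigO_principal.1 hf
  refine Integrable.mono' ((exp_neg_integrableOn_Ioi 0 hδ).norm.const_mul C)
    hm.aestronglyMeasurable ?_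
  filter_upwards [ae_restrict_mem measurableSet_Ioi] with t ht
  exact hC t (Set.Ioi_subset_Ici_self ht)

/-- The constant term of the polynomial is `∫₀^∞ f`, because the tails of `f` decay. -/
theorem ExpDecay.asympPoly_integral (hf : ExpDecay f) (hm : Measurable f) :
    AsympPoly fun t => ∫ v in 0..t, f v := by
  have hi := hf.integrableOn_Ioi hm
  obtain ⟨δ, hδ, hf⟩ := hf
  obtain ⟨C, hC⟩ := isBigO_principal.1 hf
  refine ⟨Polynomial.C (∫ v in Set.Ioi 0, f v), δ, hδ,
    isBigO_principal.2 ⟨C / δ, fun t (ht : 0 ≤ t) => ?_⟩⟩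
  have htail : (∫ v in 0..t, f v) - ∫ v in Set.Ioi 0, f v = -∫ v in Set.Ioi t, f v := by
    rw [← intervalIntegral.integral_interval_add_Ioi hi (hi.mono_set (Set.Ioi_subset_Ioi ht))]
    ring
  rw [Polynomial.eval_C, htail, norm_neg]
  calc ‖∫ v in Set.Ioi t, f v‖ ≤ ∫ v in Set.Ioi t, C * Real.exp (-δ * v) := by
        refine norm_integral_le_of_norm_le ((exp_neg_integrableOn_Ioi t hδ).const_mul C) ?_
        filter_upwards [ae_restrict_mem measurableSet_Ioi] with v hv
        simpa using hC v (ht.trans hv.le)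
    _ = C / δ * ‖Real.exp (-δ * t)‖ := by
        rw [integral_const_mul, integral_exp_mul_Ioi (neg_lt_zero.2 hδ), Real.norm_eq_abs,
          Real.abs_exp]
        field_simp

theorem asympPoly_integral_eval (p : Polynomial ℝ) : AsympPoly fun t => ∫ v in 0..t, p.eval v := by
  refine (AsympPoly.sum (range (p.natDegree + 1)) fun n _ => asympPoly_eval
    (Polynomial.monomial (n + 1) (p.coeff n / (n + 1)))).congr fun t _ => ?_
  simp only [Polynomial.eval_eq_sum_range (p := p), Polynomial.eval_monomial]
  rw [intervalIntegral.integral_finsetSum fun n _ =>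
    (by fun_prop : Continuous fun v : ℝ => p.coeff n * v ^ n).intervalIntegrable 0 t]
  refine sum_congr rfl fun n _ => ?_
  rw [intervalIntegral.integral_const_mul, integral_pow]
  ring

theorem AsympPoly.integral (hf : AsympPoly f) (hm : Measurable f) :
    AsympPoly fun t => ∫ v in 0..t, f v := by
  obtain ⟨p, hp⟩ := hf
  have hpm : Measurable fun t => f t - p.eval t := hm.sub p.continuous.measurable
  refine ((hp.asympPoly_integral hpm).add (asympPoly_integral_eval p)).congr fun t ht => ?_
  have hi : IntervalIntegrable (fun v => f v - p.eval v) volume 0 t :=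
    (intervalIntegrable_iff_integrableOn_Ioc_of_le ht).2
      ((hp.integrableOn_Ioi hpm).mono_set Set.Ioc_subset_Ioi_self)
  rw [← intervalIntegral.integral_add hi (p.continuous.intervalIntegrable 0 t)]
  simp only [sub_add_cancel]

end

/-! ### The hyperbola method -/

theorem mem_filter_mul_le {N : ℕ} {x : ℕ × ℕ} :
    x ∈ ({x ∈ Ioc 0 N ×ˢ Ioc 0 N | x.1 * x.2 ≤ N} : Finset (ℕ × ℕ)) ↔
      0 < x.1 ∧ 0 < x.2 ∧ x.1 * x.2 ≤ N := by
  simp only [mem_filter, mem_product, mem_Ioc]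
  constructor
  · tauto
  · exact fun ⟨h1, h2, h⟩ => ⟨⟨⟨h1, by nlinarith⟩, h2, by nlinarith⟩, h⟩

theorem sum_Ioc_mul_hyperbola {R : Type*} [CommRing R] (f g : ArithmeticFunction R) {N l m : ℕ}
    (h₁ : l * m ≤ N) (h₂ : N < (l + 1) * (m + 1)) :
    ∑ n ∈ Ioc 0 N, (f * g) n = ∑ a ∈ Ioc 0 l, f a * ∑ b ∈ Ioc 0 (N / a), g b +
      ∑ b ∈ Ioc 0 m, g b * ∑ a ∈ Ioc 0 (N / b), f a -
      (∑ a ∈ Ioc 0 l, f a) * ∑ b ∈ Ioc 0 m, g b := by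
  set S := {x ∈ Ioc 0 N ×ˢ Ioc 0 N | x.1 * x.2 ≤ N}
  have mem_S (x : ℕ × ℕ) : x ∈ S ↔ 0 < x.1 ∧ 0 < x.2 ∧ x.1 * x.2 ≤ N := mem_filter_mul_le
  have hunion : {x ∈ S | x.1 ≤ l} ∪ {x ∈ S | x.2 ≤ m} = S := by
    ext x
    simp only [mem_union, mem_filter, ← and_or_left, and_iff_left_iff_imp, mem_S]
    rintro ⟨-, -, h⟩
    by_contra! hx
    nlinarith
  have hinter : {x ∈ S | x.1 ≤ l} ∩ {x ∈ S | x.2 ≤ m} = Ioc 0 l ×ˢ Ioc 0 m := by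
    ext x
    simp only [mem_inter, mem_filter, mem_S, mem_product, mem_Ioc]
    constructor
    · tauto
    · rintro ⟨⟨h1, hl⟩, h2, hm⟩
      have := (Nat.mul_le_mul hl hm).trans h₁
      tauto
  have hrow : ∑ x ∈ S with x.1 ≤ l, f x.1 * g x.2 =
      ∑ a ∈ Ioc 0 l, f a * ∑ b ∈ Ioc 0 (N / a), g b := by
    simp_rw [mul_sum]
    refine sum_finset_product _ _ _ fun x => ?_
    have := fun h : 0 < x.1 => Nat.le_div_iff_mul_le h (x := x.2) (y := N)
    grind
  have hcol : ∑ x ∈ S with x.2 ≤ m, f x.1 * g x.2 =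
      ∑ b ∈ Ioc 0 m, g b * ∑ a ∈ Ioc 0 (N / b), f a := by
    simp_rw [mul_sum, mul_comm (g _)]
    refine sum_finset_product_right _ _ _ fun x => ?_
    have := fun h : 0 < x.2 => Nat.le_div_iff_mul_le h (x := x.1) (y := N)
    grind
  rw [ArithmeticFunction.sum_Ioc_mul_eq_sum_prod_filter, ← hrow, ← hcol, ← sum_union_inter, hunion,
    hinter, sum_mul_sum, sum_product, add_sub_cancel_right]

theorem setIntegral_exp_image {s : Set ℝ} (hs : MeasurableSet s) (F : ℝ → ℝ) :
    ∫ r in Real.exp '' s, F r = ∫ t in s, Real.exp t * F (Real.exp t) :=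
  integral_image_eq_integral_deriv_smul_of_monotoneOn hs
    (fun x _ => (Real.hasDerivAt_exp x).hasDerivWithinAt) (Real.exp_monotone.monotoneOn s) F

/-- The normalised summatory function `e⁻ᵗ ∑_{n ≤ eᵗ} f n` in the logarithmic variable `t`. -/
noncomputable def expSum (f : ArithmeticFunction ℝ) (t : ℝ) : ℝ :=
  Real.exp (-t) * ∑ n ∈ Ioc 0 ⌊Real.exp t⌋₊, f n

theorem measurable_expSum (f : ArithmeticFunction ℝ) : Measurable (expSum f) :=
  (Real.measurable_exp.comp measurable_neg).mul
    ((measurable_from_nat (f := fun N => ∑ n ∈ Ioc 0 N, f n)).comp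
      (Nat.measurable_floor.comp Real.measurable_exp))

theorem hasDerivAt_eval_log_div (p : Polynomial ℝ) {u : ℝ} (hu : 0 < u) :
    HasDerivAt (fun u => p.eval (Real.log u) / u)
      ((p.derivative - p).eval (Real.log u) / u ^ 2) u := by
  have h := (p.hasDerivAt _).comp u (Real.hasDerivAt_log hu.ne')
  convert! h.div (hasDerivAt_id u) hu.ne' using 1
  simp only [Polynomial.eval_sub, Function.comp_apply, id_eq]
  field_simp

theorem sum_eval_log_div_mul_eq_sub_integral (f : ArithmeticFunction ℝ) (p : Polynomial ℝ) {t : ℝ}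
    (ht : 0 ≤ t) :
    ∑ n ∈ Ioc 0 ⌊Real.exp t⌋₊, p.eval (Real.log n) / n * f n =
      p.eval t * expSum f t - ∫ v in 0..t, (p.derivative - p).eval v * expSum f v := by
  have hsum (F : ℕ → ℝ) (N : ℕ) (hF : F 0 = 0) : ∑ n ∈ Icc 0 N, F n = ∑ n ∈ Ioc 0 N, F n := by
    rw [← add_sum_Ioc_eq_sum_Icc N.zero_le, hF, zero_add]
  have hd (u : ℝ) (hu : u ∈ Set.Icc 1 (Real.exp t)) :=
    hasDerivAt_eval_log_div p (zero_lt_one.trans_le hu.1)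
  have hcont : ContinuousOn (fun u => (p.derivative - p).eval (Real.log u) / u ^ 2)
      (Set.Icc 1 (Real.exp t)) := by
    have h0 : ∀ u ∈ Set.Icc 1 (Real.exp t), u ≠ 0 := fun u hu => (zero_lt_one.trans_le hu.1).ne'
    exact ((Polynomial.continuous _).comp_continuousOn (continuousOn_id.log h0)).div
      (continuousOn_id.pow 2) fun u hu => pow_ne_zero 2 (h0 u hu)
  have habel := sum_mul_eq_sub_integral_mul₀ f (f := fun u => p.eval (Real.log u) / u) f.map_zero
    (Real.exp t) (fun u hu => (hd u hu).differentiableAt)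
    (hcont.integrableOn_Icc.congr_fun (fun u hu => (hd u hu).deriv.symm) measurableSet_Icc)
  rw [hsum _ _ (by simp), hsum _ _ f.map_zero] at habel
  rw [habel, Real.log_exp, expSum, Real.exp_neg, ← mul_assoc, div_eq_mul_inv]
  congr 1
  rw [intervalIntegral.integral_of_le ht, ← Real.exp_zero, ← Real.image_exp_Ioc,
    setIntegral_exp_image measurableSet_Ioc]
  refine setIntegral_congr_fun measurableSet_Ioc fun v _ => ?_
  simp only [(hasDerivAt_eval_log_div p (Real.exp_pos v)).deriv, hsum _ _ f.map_zero,
    Real.log_exp, expSum, Real.exp_neg]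
  field_simp

theorem AsympPoly.sum_eval_log_div_mul {f : ArithmeticFunction ℝ} (hf : AsympPoly (expSum f))
    (p : Polynomial ℝ) :
    AsympPoly fun t => ∑ n ∈ Ioc 0 ⌊Real.exp t⌋₊, p.eval (Real.log n) / n * f n := by
  have hint := ((asympPoly_eval (p.derivative - p)).mul hf).integral
    ((Polynomial.continuous _).measurable.mul (measurable_expSum f))
  exact (((asympPoly_eval p).mul hf).sub hint).congr fun t ht =>
    sum_eval_log_div_mul_eq_sub_integral f p ht

theorem eval_sub_eq_sum {R : Type*} [CommRing R] (p : Polynomial R) (s t : R) :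
    p.eval (t - s) = ∑ i ∈ range (p.natDegree + 1),
      ((Polynomial.hasseDeriv i p).comp (-Polynomial.X)).eval s * t ^ i := by
  rw [sub_eq_add_neg, ← Polynomial.taylor_eval, Polynomial.eval_eq_sum_range,
    Polynomial.natDegree_taylor]
  simp only [Polynomial.taylor_coeff, Polynomial.eval_comp, Polynomial.eval_neg,
    Polynomial.eval_X]

theorem AsympPoly.sum_eval_sub_log {f : ArithmeticFunction ℝ} (hf : AsympPoly (expSum f))
    (p : Polynomial ℝ) :
    AsympPoly fun t => ∑ a ∈ Ioc 0 ⌊Real.exp (t / 2)⌋₊, f a / a * p.eval (t - Real.log a) := by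
  refine (AsympPoly.sum (range (p.natDegree + 1)) fun i _ =>
    ((hf.sum_eval_log_div_mul ((Polynomial.hasseDeriv i p).comp (-Polynomial.X))).comp_div
      two_pos).mul (asympPoly_eval (Polynomial.X ^ i))).congr fun t _ => ?_
  simp only [eval_sub_eq_sum p, Polynomial.eval_pow, Polynomial.eval_X, mul_sum, sum_mul]
  rw [sum_comm]
  exact sum_congr rfl fun i _ => sum_congr rfl fun a _ => by ring

theorem log_le_of_mem_Ioc_floor_exp {n : ℕ} {u : ℝ} (hn : n ∈ Ioc 0 ⌊Real.exp u⌋₊) :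
    Real.log n ≤ u := by
  obtain ⟨h0, hn⟩ := mem_Ioc.1 hn
  exact (Real.log_le_iff_le_exp (mod_cast h0)).2 ((Nat.le_floor_iff (Real.exp_pos u).le).1 hn)

/-- The truncation at `exp (t / 2)` keeps `t - log a ≥ t / 2`, where `g` is still exponentially
small in `t`. -/
theorem ExpDecay.sum_comp_sub_log {f : ArithmeticFunction ℝ} (hf0 : 0 ≤ ⇑f)
    (hf : AsympPoly (expSum f)) {g : ℝ → ℝ} (hg : ExpDecay g) :
    ExpDecay fun t => ∑ a ∈ Ioc 0 ⌊Real.exp (t / 2)⌋₊, f a / a * g (t - Real.log a) := by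
  obtain ⟨δ, hδ, hg⟩ := hg
  obtain ⟨C, hC⟩ := isBigO_principal.1 hg
  have hbound : ExpDecay fun t =>
      Real.exp (-(δ / 2) * t) * ∑ a ∈ Ioc 0 ⌊Real.exp (t / 2)⌋₊, f a / a :=
    (expDecay_exp_neg_mul (half_pos hδ)).mul_asympPoly <|
      ((hf.sum_eval_log_div_mul 1).comp_div two_pos).congr fun t _ => by
        simp [div_eq_inv_mul]
  refine hbound.of_isBigO (isBigO_principal.2 ⟨C, fun t (ht : 0 ≤ t) => ?_⟩)
  have hpos (a : ℕ) : 0 ≤ f a / a := div_nonneg (hf0 a) a.cast_nonneg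
  have hterm : ∀ a ∈ Ioc 0 ⌊Real.exp (t / 2)⌋₊, ‖f a / a * g (t - Real.log a)‖ ≤
      f a / a * (C * Real.exp (-(δ / 2) * t)) := fun a ha => by
    have hlog := log_le_of_mem_Ioc_floor_exp ha
    have hga := hC (t - Real.log a) (Set.mem_Ici.2 (by linarith))
    have hC0 : 0 ≤ C := by
      refine nonneg_of_mul_nonneg_left ((norm_nonneg _).trans hga) (norm_pos_iff.2 ?_)
      positivity
    rw [norm_mul, Real.norm_of_nonneg (hpos a)]
    refine mul_le_mul_of_nonneg_left (hga.trans ?_) (hpos a)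
    rw [Real.norm_eq_abs, Real.abs_exp]
    refine mul_le_mul_of_nonneg_left (Real.exp_le_exp.2 ?_) hC0
    nlinarith
  refine (norm_sum_le_of_le _ hterm).trans_eq ?_
  have hsum := sum_nonneg fun a (_ : a ∈ Ioc 0 ⌊Real.exp (t / 2)⌋₊) => hpos a
  rw [← sum_mul, Real.norm_of_nonneg (mul_nonneg (Real.exp_pos _).le hsum)]
  ring

theorem AsympPoly.sum_comp_sub_log {f : ArithmeticFunction ℝ} (hf0 : 0 ≤ ⇑f)
    (hf : AsympPoly (expSum f)) {g : ℝ → ℝ} (hg : AsympPoly g) :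
    AsympPoly fun t => ∑ a ∈ Ioc 0 ⌊Real.exp (t / 2)⌋₊, f a / a * g (t - Real.log a) := by
  obtain ⟨p, hp⟩ := hg
  refine ((hp.sum_comp_sub_log hf0 hf).asympPoly.add (hf.sum_eval_sub_log p)).congr fun t _ => ?_
  rw [← sum_add_distrib]
  exact sum_congr rfl fun a _ => by ring

theorem sum_Ioc_floor_exp_div (g : ArithmeticFunction ℝ) (t : ℝ) {a : ℕ} (ha : 0 < a) :
    ∑ b ∈ Ioc 0 (⌊Real.exp t⌋₊ / a), g b = Real.exp t / a * expSum g (t - Real.log a) := by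
  have ha' : (0 : ℝ) < a := mod_cast ha
  have hexp : Real.exp (t - Real.log a) = Real.exp t / a := by rw [Real.exp_sub, Real.exp_log ha']
  rw [expSum, Real.exp_neg, hexp, Nat.floor_div_natCast, mul_inv_cancel_left₀]
  positivity

theorem expSum_mul_hyperbola (f g : ArithmeticFunction ℝ) (t : ℝ) :
    expSum (f * g) t =
      ∑ a ∈ Ioc 0 ⌊Real.exp (t / 2)⌋₊, f a / a * expSum g (t - Real.log a) +
      ∑ b ∈ Ioc 0 ⌊Real.exp (t / 2)⌋₊, g b / b * expSum f (t - Real.log b) -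
      expSum f (t / 2) * expSum g (t / 2) := by
  set m := ⌊Real.exp (t / 2)⌋₊ with hm
  have hsq : Real.exp (t / 2) * Real.exp (t / 2) = Real.exp t := by rw [← Real.exp_add, add_halves]
  have hle : m * m ≤ ⌊Real.exp t⌋₊ := by
    refine Nat.le_floor ?_
    rw [← hsq]
    push_cast
    gcongr <;> exact Nat.floor_le (Real.exp_pos _).le
  have hlt : ⌊Real.exp t⌋₊ < (m + 1) * (m + 1) := by
    refine (Nat.floor_lt (Real.exp_pos t).le).2 ?_
    rw [← hsq]
    push_cast
    gcongr <;> exact Nat.lt_floor_add_one _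
  have hhalf (f g : ArithmeticFunction ℝ) :
      Real.exp (-t) * ∑ a ∈ Ioc 0 m, f a * ∑ b ∈ Ioc 0 (⌊Real.exp t⌋₊ / a), g b =
        ∑ a ∈ Ioc 0 m, f a / a * expSum g (t - Real.log a) := by
    rw [mul_sum]
    refine sum_congr rfl fun a ha => ?_
    rw [sum_Ioc_floor_exp_div g t (mem_Ioc.1 ha).1, Real.exp_neg]
    field_simp
  rw [expSum, sum_Ioc_mul_hyperbola f g hle hlt, mul_sub, mul_add, hhalf, hhalf, expSum, expSum,
    ← hm, mul_mul_mul_comm, ← Real.exp_add]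
  ring_nf

theorem AsympPoly.expSum_mul {f g : ArithmeticFunction ℝ} (hf0 : 0 ≤ ⇑f) (hg0 : 0 ≤ ⇑g)
    (hf : AsympPoly (expSum f)) (hg : AsympPoly (expSum g)) : AsympPoly (expSum (f * g)) :=
  (((AsympPoly.sum_comp_sub_log hf0 hf hg).add (AsympPoly.sum_comp_sub_log hg0 hg hf)).sub
    ((hf.comp_div two_pos).mul (hg.comp_div two_pos))).congr fun t _ => expSum_mul_hyperbola f g t

theorem asympPoly_expSum_one : AsympPoly (expSum 1) := by
  refine (expDecay_exp_neg_mul one_pos).asympPoly.congr fun t ht => ?_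
  have h1 : 1 ∈ Ioc 0 ⌊Real.exp t⌋₊ := mem_Ioc.2 ⟨one_pos, Nat.le_floor (by simpa using ht)⟩
  simp [expSum, ArithmeticFunction.one_apply, mem_Ioc.1 h1]

theorem asympPoly_expSum_zeta : AsympPoly (expSum (ζ : ArithmeticFunction ℝ)) := by
  refine ⟨1, 1, one_pos, isBigO_principal.2 ⟨1, fun t _ => ?_⟩⟩
  have hsum : ∑ n ∈ Ioc 0 ⌊Real.exp t⌋₊, (ζ : ArithmeticFunction ℝ) n = ⌊Real.exp t⌋₊ := by
    simp only [ArithmeticFunction.natCoe_apply]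
    exact_mod_cast ArithmeticFunction.sum_Ioc_zeta _
  have hfloor : |(⌊Real.exp t⌋₊ : ℝ) - Real.exp t| ≤ 1 := by
    have h1 := Nat.floor_le (Real.exp_pos t).le
    have h2 := Nat.lt_floor_add_one (Real.exp t)
    exact abs_le.2 ⟨by linarith, by linarith⟩
  rw [expSum, hsum, Polynomial.eval_one, one_mul]
  calc ‖Real.exp (-t) * ⌊Real.exp t⌋₊ - 1‖
      = ‖Real.exp (-t)‖ * |(⌊Real.exp t⌋₊ : ℝ) - Real.exp t| := by
        rw [← Real.norm_eq_abs (_ - _), ← norm_mul, mul_sub, ← Real.exp_add, neg_add_cancel,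
          Real.exp_zero]
    _ ≤ ‖Real.exp (-1 * t)‖ := by
        rw [neg_one_mul]
        exact mul_le_of_le_one_right (norm_nonneg _) hfloor

theorem arithmeticFunction_pow_nonneg {R : Type*} [Semiring R] [PartialOrder R]
    [IsOrderedRing R] {f : ArithmeticFunction R} (hf : 0 ≤ ⇑f) (k : ℕ) : 0 ≤ ⇑(f ^ k) := by
  intro n
  induction k generalizing n with
  | zero =>
    rw [pow_zero, ArithmeticFunction.one_apply]
    split_ifs
    exacts [zero_le_one, le_rfl]
  | succ k ih =>
    rw [pow_succ, ArithmeticFunction.mul_apply]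
    exact sum_nonneg fun x _ => mul_nonneg (ih x.1) (hf x.2)

theorem AsympPoly.expSum_pow {f : ArithmeticFunction ℝ} (hf0 : 0 ≤ ⇑f) (hf : AsympPoly (expSum f))
    (k : ℕ) : AsympPoly (expSum (f ^ k)) := by
  induction k with
  | zero => simpa only [pow_zero] using asympPoly_expSum_one
  | succ k ih =>
    rw [pow_succ]
    exact ih.expSum_mul (arithmeticFunction_pow_nonneg hf0 k) hf0 hf

/-! ### Laplace transforms -/

theorem integral_pow_mul_exp_neg_mul {w : ℝ} (hw : 0 < w) (m : ℕ) :
    ∫ t in Set.Ioi 0, t ^ m * Real.exp (-w * t) = m.factorial / w ^ (m + 1) := by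
  have h := Real.integral_rpow_mul_exp_neg_mul_Ioi (a := m + 1) (by positivity) hw
  rw [Real.Gamma_nat_eq_factorial, add_sub_cancel_right, ← Nat.cast_add_one] at h
  simp only [Real.rpow_natCast, ← neg_mul] at h
  rw [h, one_div_pow, one_div, mul_comm, div_eq_mul_inv]

theorem AsympPoly.integrableOn_mul_exp_neg_mul {f : ℝ → ℝ} (hf : AsympPoly f) (hm : Measurable f)
    {w : ℝ} (hw : 0 < w) : IntegrableOn (fun t => f t * Real.exp (-w * t)) (Set.Ioi 0) :=
  (((expDecay_exp_neg_mul hw).mul_asympPoly hf).congr fun _ _ => mul_comm _ _).integrableOn_Ioi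
    (by fun_prop)

theorem asympPoly_pow (n : ℕ) : AsympPoly fun t => t ^ n := by
  simpa only [Polynomial.eval_pow, Polynomial.eval_X] using asympPoly_eval (Polynomial.X ^ n)

theorem integrableOn_pow_mul_exp_neg_mul {w : ℝ} (hw : 0 < w) (n : ℕ) :
    IntegrableOn (fun t => t ^ n * Real.exp (-w * t)) (Set.Ioi 0) :=
  (asympPoly_pow n).integrableOn_mul_exp_neg_mul (by fun_prop) hw

theorem hasSum_integral_mul_pow {f : ℝ → ℝ} (hm : Measurable f) {δ : ℝ} (hδ : 0 < δ)
    (hf : f =O[𝓟 (Set.Ici 0)] fun t => Real.exp (-δ * t)) {d : ℕ → ℝ}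
    (hd : Summable fun m => |d m| * (m.factorial / δ ^ m)) :
    HasSum (fun m => d m * ∫ t in Set.Ioi 0, f t * t ^ m)
      (∫ t in Set.Ioi 0, f t * ∑' m, d m * t ^ m) := by
  obtain ⟨C, hC⟩ := isBigO_principal.1 hf
  have hint (m : ℕ) : IntegrableOn (fun t => f t * t ^ m) (Set.Ioi 0) :=
    (ExpDecay.mul_pow ⟨δ, hδ, hf⟩ m).integrableOn_Ioi (by fun_prop)
  have hnorm (m : ℕ) : ∫ t in Set.Ioi 0, ‖d m * (f t * t ^ m)‖ ≤
      C / δ * (|d m| * (m.factorial / δ ^ m)) := by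
    have hle : ∫ t in Set.Ioi 0, ‖f t * t ^ m‖ ≤ C * (m.factorial / δ ^ (m + 1)) := by
      rw [← integral_pow_mul_exp_neg_mul hδ, ← integral_const_mul]
      refine setIntegral_mono_on (hint m).norm ((integrableOn_pow_mul_exp_neg_mul hδ m).const_mul C)
        measurableSet_Ioi fun t (ht : 0 < t) => ?_
      have hft := hC t ht.le
      rw [Real.norm_eq_abs (Real.exp _), Real.abs_exp] at hft
      rw [norm_mul, norm_pow, Real.norm_of_nonneg ht.le, mul_left_comm, mul_comm]
      gcongr
    simp only [norm_mul (d m), integral_const_mul]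
    refine (mul_le_mul_of_nonneg_left hle (norm_nonneg _)).trans_eq ?_
    rw [Real.norm_eq_abs, pow_succ]
    field_simp
  have hsum := hasSum_integral_of_summable_integral_norm (fun m => (hint m).const_mul (d m))
    (.of_nonneg_of_le (fun m => by positivity) hnorm (hd.mul_left (C / δ)))
  simp only [integral_const_mul] at hsum
  convert! hsum using 3
  rw [← tsum_mul_left]
  exact tsum_congr fun m => mul_left_comm _ _ _

/-- The Laplace transform of `f`, on the positive real axis. -/
noncomputable def laplace (f : ℝ → ℝ) (w : ℝ) : ℝ :=
  ∫ t in Set.Ioi 0, f t * Real.exp (-w * t)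

theorem hasSum_laplace {f : ℝ → ℝ} (hm : Measurable f) {δ : ℝ}
    (hf : f =O[𝓟 (Set.Ici 0)] fun t => Real.exp (-δ * t)) {w : ℝ} (hw : 0 < w) (hwδ : w < δ) :
    HasSum (fun m => (-1) ^ m / m.factorial * (∫ t in Set.Ioi 0, f t * t ^ m) * w ^ m)
      (laplace f w) := by
  have hδ := hw.trans hwδ
  have hd : Summable fun m : ℕ => |(-w) ^ m / m.factorial| * (m.factorial / δ ^ m) := by
    refine (summable_geometric_of_lt_one (by positivity) ((div_lt_one hδ).2 hwδ)).congr fun m => ?_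
    rw [abs_div, abs_pow, abs_neg, abs_of_pos hw, Nat.abs_cast, div_pow]
    field_simp
  convert! hasSum_integral_mul_pow hm hδ hf hd using 2 with m
  · rw [neg_pow]
    ring
  · simp only [laplace, Real.exp_eq_exp_ℝ, NormedSpace.exp_eq_tsum_div, mul_pow, div_mul_eq_mul_div]

theorem laplace_sub {f g : ℝ → ℝ} (hf : AsympPoly f) (hg : AsympPoly g) (hfm : Measurable f)
    (hgm : Measurable g) {w : ℝ} (hw : 0 < w) :
    laplace (fun t => f t - g t) w = laplace f w - laplace g w := by
  simp only [laplace, sub_mul]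
  exact integral_sub (hf.integrableOn_mul_exp_neg_mul hfm hw)
    (hg.integrableOn_mul_exp_neg_mul hgm hw)

theorem laplace_sum_mul_pow (s : Finset ℕ) (c : ℕ → ℝ) {w : ℝ} (hw : 0 < w) :
    laplace (fun t => ∑ i ∈ s, c i * t ^ i) w = ∑ i ∈ s, c i * i.factorial * w⁻¹ ^ (i + 1) := by
  simp only [laplace, sum_mul, mul_assoc]
  rw [integral_finsetSum _ fun i _ => (integrableOn_pow_mul_exp_neg_mul hw i).const_mul (c i)]
  refine sum_congr rfl fun i _ => ?_
  rw [integral_const_mul, integral_pow_mul_exp_neg_mul hw, inv_pow, div_eq_mul_inv]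

theorem eq_zero_of_laplace_eval_isBigO_one {p : Polynomial ℝ}
    (h : laplace (fun t => p.eval t) =O[𝓝[>] 0] fun _ => (1 : ℝ)) : p = 0 := by
  set r : Polynomial ℝ := ∑ i ∈ range (p.natDegree + 1),
    Polynomial.monomial (i + 1) (p.coeff i * i.factorial) with hr
  have hlaplace (u : ℝ) (hu : 0 < u) : laplace (fun t => p.eval t) u⁻¹ = r.eval u := by
    simp only [Polynomial.eval_eq_sum_range (p := p), hr, Polynomial.eval_finsetSum,
      Polynomial.eval_monomial]
    rw [laplace_sum_mul_pow _ _ (inv_pos.2 hu), inv_inv]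
  have hbdd : (fun u => r.eval u) =O[atTop] fun _ => (1 : ℝ) :=
    (h.comp_tendsto tendsto_inv_atTop_nhdsGT_zero).congr'
      ((eventually_gt_atTop 0).mono hlaplace) .rfl
  have hdeg : r.degree ≤ 0 :=
    (Polynomial.isBoundedUnder_abs_atTop_iff r).1 ((isBigO_one_iff ℝ).1 hbdd)
  ext i
  have hcoeff : r.coeff (i + 1) = p.coeff i * i.factorial := by
    simp +contextual [hr, Polynomial.coeff_monomial, Polynomial.coeff_eq_zero_of_natDegree_lt]
  have : r.coeff (i + 1) = 0 :=
    Polynomial.coeff_eq_zero_of_degree_lt (hdeg.trans_lt (mod_cast i.succ_pos))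
  simpa [hcoeff, i.factorial_ne_zero] using this

theorem ExpDecay.laplace_isBigO_one {f : ℝ → ℝ} (hf : ExpDecay f) (hm : Measurable f) :
    laplace f =O[𝓝[>] 0] fun _ => (1 : ℝ) := by
  refine .of_bound (∫ t in Set.Ioi 0, ‖f t‖) ?_
  filter_upwards [self_mem_nhdsWithin] with w (hw : 0 < w)
  rw [norm_one, mul_one]
  refine norm_integral_le_of_norm_le (hf.integrableOn_Ioi hm).norm ?_
  filter_upwards [ae_restrict_mem measurableSet_Ioi] with t (ht : 0 < t)
  rw [norm_mul, Real.norm_eq_abs (Real.exp _), Real.abs_exp]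
  refine mul_le_of_le_one_right (norm_nonneg _) (Real.exp_le_one_iff.2 ?_)
  nlinarith

theorem AsympPoly.expDecay_of_laplace_isBigO_one {f : ℝ → ℝ} (hf : AsympPoly f)
    (hm : Measurable f) (h : laplace f =O[𝓝[>] 0] fun _ => (1 : ℝ)) : ExpDecay f := by
  have ⟨p, hp⟩ := hf
  have hpm : Measurable fun t => f t - p.eval t := hm.sub p.continuous.measurable
  have hlaplace : ∀ᶠ w in 𝓝[>] 0,
      laplace f w - laplace (fun t => f t - p.eval t) w = laplace (fun t => p.eval t) w := by
    filter_upwards [self_mem_nhdsWithin] with w hw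
    simp only [← laplace_sub hf hp.asympPoly hm hpm hw, sub_sub_cancel]
  have hp0 : p = 0 :=
    eq_zero_of_laplace_eval_isBigO_one ((h.sub (hp.laplace_isBigO_one hpm)).congr' hlaplace .rfl)
  simpa [hp0] using hp

theorem isBigO_one_of_hasSum_pow {a : ℕ → ℝ} {F : ℝ → ℝ} {ε : ℝ} (hε : 0 < ε)
    (ha : ∀ w, 0 < w → w < ε → HasSum (fun n => a n * w ^ n) (F w)) :
    F =O[𝓝[>] 0] fun _ => (1 : ℝ) := by
  have hs := (ha (ε / 2) (half_pos hε) (half_lt_self hε)).summable.norm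
  refine .of_bound (∑' n, ‖a n * (ε / 2) ^ n‖) ?_
  filter_upwards [Ioo_mem_nhdsGT (half_pos hε)] with w ⟨hw, hwε⟩
  rw [norm_one, mul_one, ← (ha w hw (hwε.trans (half_lt_self hε))).tsum_eq]
  refine tsum_of_norm_bounded hs.hasSum fun n => ?_
  rw [norm_mul, norm_mul, norm_pow, norm_pow]
  gcongr
  rw [Real.norm_of_nonneg hw.le, Real.norm_of_nonneg (half_pos hε).le]
  exact hwε.le

theorem eq_zero_of_hasSum_pow_zero {a : ℕ → ℝ} {ε : ℝ} (hε : 0 < ε)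
    (ha : ∀ w, 0 < w → w < ε → HasSum (fun n => a n * w ^ n) 0) : a = 0 := by
  let p := FormalMultilinearSeries.ofScalars ℝ a
  have hrad : 0 < p.radius := by
    refine lt_of_lt_of_le (b := ENNReal.ofReal (ε / 2)) (by simpa using hε) ?_
    refine p.le_radius_of_tendsto (r := (ε / 2).toNNReal) (l := 0) ?_
    have := (ha (ε / 2) (half_pos hε) (half_lt_self hε)).summable.tendsto_atTop_zero.norm
    simpa [p, FormalMultilinearSeries.ofScalars_norm, abs_mul, abs_of_pos hε,
      Real.coe_toNNReal _ (half_pos hε).le] using this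
  have hp : HasFPowerSeriesAt p.sum p 0 := (p.hasFPowerSeriesOnBall hrad).hasFPowerSeriesAt
  have hev : ∀ᶠ w in 𝓝[>] (0 : ℝ), p.sum w = 0 := by
    filter_upwards [Ioo_mem_nhdsGT hε] with w hw
    rw [FormalMultilinearSeries.sum]
    simpa [p, FormalMultilinearSeries.ofScalars_apply_eq, mul_comm] using
      (ha w hw.1 hw.2).tsum_eq
  have hzero := hp.analyticAt.frequently_zero_iff_eventually_zero.1
    (hev.frequently.filter_mono (nhdsWithin_mono _ fun _ hx => ne_of_gt hx))
  exact (FormalMultilinearSeries.ofScalars_series_eq_zero ℝ).1 (hp.congr hzero).eq_zero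

theorem AsympPoly.expDecay_of_hasSum_laplace {f : ℝ → ℝ} (hf : AsympPoly f) (hm : Measurable f)
    {a : ℕ → ℝ} {ε : ℝ} (hε : 0 < ε)
    (ha : ∀ w, 0 < w → w < ε → HasSum (fun n => a n * w ^ n) (laplace f w)) : ExpDecay f :=
  hf.expDecay_of_laplace_isBigO_one hm (isBigO_one_of_hasSum_pow hε ha)

theorem ExpDecay.integral_mul_pow_eq {f : ℝ → ℝ} (hf : ExpDecay f) (hm : Measurable f)
    {a : ℕ → ℝ} {ε : ℝ} (hε : 0 < ε)
    (ha : ∀ w, 0 < w → w < ε → HasSum (fun n => a n * w ^ n) (laplace f w)) (n : ℕ) :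
    (-1) ^ n / n.factorial * ∫ t in Set.Ioi 0, f t * t ^ n = a n := by
  obtain ⟨δ, hδ, hf⟩ := hf
  have hzero := eq_zero_of_hasSum_pow_zero (lt_min hδ hε) fun w hw hwlt => by
    obtain ⟨hwδ, hwε⟩ := lt_min_iff.1 hwlt
    simpa only [← sub_mul, sub_self] using (hasSum_laplace hm hf hw hwδ).sub (ha w hw hwε)
  exact sub_eq_zero.1 (congrFun hzero n)

theorem AsympPoly.isBigO_exp_mul {f : ℝ → ℝ} (hf : AsympPoly f) {ε : ℝ} (hε : 0 < ε) :
    f =O[𝓟 (Set.Ici 0)] fun t => Real.exp (ε * t) := by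
  obtain ⟨p, δ, hδ, hp⟩ := hf
  have hle := isBigO_exp_neg_mul_of_le (show -ε ≤ δ by linarith)
  rw [neg_neg] at hle
  exact ((hp.trans hle).add (isBigO_eval_exp_mul hε p)).congr_left fun t => sub_add_cancel _ _

theorem sum_Ioc_isBigO_rpow {f : ArithmeticFunction ℝ} (hf : AsympPoly (expSum f)) {ε : ℝ}
    (hε : 0 < ε) :
    (fun N : ℕ => ∑ n ∈ Ioc 0 N, f n) =O[atTop] fun N : ℕ => (N : ℝ) ^ (1 + ε) := by
  have hlog : Tendsto (fun N : ℕ => Real.log N) atTop (𝓟 (Set.Ici 0)) :=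
    tendsto_principal.2 (Eventually.of_forall fun N => Real.log_natCast_nonneg N)
  refine ((isBigO_refl (fun N : ℕ => (N : ℝ)) atTop).mul
    ((hf.isBigO_exp_mul hε).comp_tendsto hlog)).congr' ?_ ?_
  all_goals
    filter_upwards [eventually_gt_atTop 0] with N hN
    have hN : (0 : ℝ) < N := mod_cast hN
  · rw [Function.comp_apply, expSum, Real.exp_neg, Real.exp_log hN, Nat.floor_natCast,
      mul_inv_cancel_left₀ hN.ne']
  · rw [Function.comp_apply, mul_comm ε, ← Real.rpow_def_of_pos hN, Real.rpow_add hN, Real.rpow_one]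

theorem LSeries_eq_laplace_expSum {f : ArithmeticFunction ℝ} (hf0 : 0 ≤ ⇑f)
    (hf : AsympPoly (expSum f)) {w : ℝ} (hw : 0 < w) :
    LSeries (fun n => (f n : ℂ)) (1 + w) = ((1 + w) * laplace (expSum f) w : ℝ) := by
  have hs : (1 + w / 2 : ℝ) < (1 + w : ℂ).re := by simpa using half_lt_self hw
  rw [LSeries_eq_mul_integral_of_nonneg f (by positivity) hs
    (sum_Ioc_isBigO_rpow hf (half_pos hw)) hf0]
  push_cast
  congr 1
  have hreal : ∀ r ∈ Set.Ioi (1 : ℝ),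
      (∑ n ∈ Icc 1 ⌊r⌋₊, (f n : ℂ)) * (r : ℂ) ^ (-((1 + w : ℂ) + 1)) =
      (((∑ n ∈ Ioc 0 ⌊r⌋₊, f n) * r ^ (-(1 + w + 1)) : ℝ) : ℂ) := by
    intro r hr
    push_cast [ofReal_cpow (zero_le_one.trans (le_of_lt hr))]
    rfl
  rw [setIntegral_congr_fun measurableSet_Ioi hreal, integral_complex_ofReal,
    show Set.Ioi (1 : ℝ) = Real.exp '' Set.Ioi 0 by simp,
    setIntegral_exp_image measurableSet_Ioi, ofReal_inj]
  refine setIntegral_congr_fun measurableSet_Ioi fun t _ => ?_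
  simp only [expSum, ← Real.exp_mul]
  calc Real.exp t * ((∑ n ∈ Ioc 0 ⌊Real.exp t⌋₊, f n) * Real.exp (t * -(1 + w + 1)))
      = Real.exp (t + t * -(1 + w + 1)) * ∑ n ∈ Ioc 0 ⌊Real.exp t⌋₊, f n := by
        rw [Real.exp_add]; ring
    _ = Real.exp (-t + -w * t) * ∑ n ∈ Ioc 0 ⌊Real.exp t⌋₊, f n := by ring_nf
    _ = Real.exp (-t) * (∑ n ∈ Ioc 0 ⌊Real.exp t⌋₊, f n) * Real.exp (-w * t) := by
        rw [Real.exp_add]; ring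

/-! ### The divisor functions and their error terms -/

theorem natCast_dk {R : Type*} [CommSemiring R] (k n : ℕ) :
    (dk k n : R) = ((ζ : ArithmeticFunction R) ^ k) n := by
  have hcoe : ((ζ ^ k : ArithmeticFunction ℕ) : ArithmeticFunction R) =
      (ζ : ArithmeticFunction R) ^ k := by
    induction k with
    | zero => rw [pow_zero, pow_zero, ArithmeticFunction.natCoe_one]
    | succ k ih => rw [pow_succ, pow_succ, ArithmeticFunction.natCoe_mul, ih]
  rw [dk, ← hcoe, ArithmeticFunction.natCoe_apply]

theorem LSeriesSummable_delta (s : ℂ) : LSeriesSummable LSeries.delta s := by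
  rw [LSeriesSummable, funext (LSeries.term_delta s)]
  exact (hasSum_ite_eq 1 1).summable

theorem LSeriesSummable_arithmeticFunction_pow {f : ArithmeticFunction ℂ} {s : ℂ}
    (hf : LSeriesSummable f s) (k : ℕ) : LSeriesSummable (⇑(f ^ k)) s := by
  induction k with
  | zero => exact (ArithmeticFunction.one_eq_delta ▸ LSeriesSummable_delta s :)
  | succ k ih => rw [pow_succ]; exact ArithmeticFunction.LSeriesSummable_mul ih hf

theorem LSeries_arithmeticFunction_pow {f : ArithmeticFunction ℂ} {s : ℂ}
    (hf : LSeriesSummable f s) (k : ℕ) : LSeries (⇑(f ^ k)) s = LSeries f s ^ k := by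
  induction k with
  | zero =>
    rw [pow_zero, pow_zero, show ⇑(1 : ArithmeticFunction ℂ) = LSeries.delta from
      ArithmeticFunction.one_eq_delta, LSeries_delta, Pi.one_apply]
  | succ k ih =>
    rw [pow_succ, ArithmeticFunction.LSeries_mul' (LSeriesSummable_arithmeticFunction_pow hf k) hf,
      ih, pow_succ]

theorem LSeries_dk (k : ℕ) {s : ℂ} (hs : 1 < s.re) :
    LSeries (fun n => (dk k n : ℂ)) s = riemannZeta s ^ k := by
  have hcoe : (fun n => (ζ n : ℂ)) = ⇑(ζ : ArithmeticFunction ℂ) := by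
    ext n
    rw [ArithmeticFunction.natCoe_apply]
  have hsummable := ArithmeticFunction.LSeriesSummable_zeta_iff.2 hs
  rw [hcoe] at hsummable
  simp only [natCast_dk]
  rw [LSeries_arithmeticFunction_pow hsummable, ← hcoe,
    ArithmeticFunction.LSeries_zeta_eq_riemannZeta hs]

theorem arithmeticFunction_zeta_nonneg : 0 ≤ ⇑(ζ : ArithmeticFunction ℝ) := fun n => by
  rw [ArithmeticFunction.natCoe_apply]
  exact Nat.cast_nonneg _

theorem asympPoly_expSum_zeta_pow (k : ℕ) : AsympPoly (expSum ((ζ : ArithmeticFunction ℝ) ^ k)) :=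
  asympPoly_expSum_zeta.expSum_pow arithmeticFunction_zeta_nonneg k

theorem differentiable_zetaPowAux (k : ℕ) : Differentiable ℂ (zetaPowAux k) := by
  have hne (s : ℂ) (hs : s ≠ 1) : DifferentiableAt ℂ (zetaPowAux k) s := by
    have h : (fun s : ℂ => ((s - 1) * riemannZeta s) ^ k) =ᶠ[𝓝 s] zetaPowAux k := by
      filter_upwards [isOpen_ne.mem_nhds hs] with z hz
      rw [zetaPowAux, Function.update_of_ne hz]
    refine DifferentiableAt.congr_of_eventuallyEq ?_ h.symm
    have := differentiableAt_riemannZeta hs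
    fun_prop
  intro s
  rcases eq_or_ne s 1 with rfl | hs
  · refine (analyticAt_of_differentiable_on_punctured_nhds_of_continuousAt ?_ ?_).differentiableAt
    · filter_upwards [self_mem_nhdsWithin] with z hz using hne z hz
    · rw [zetaPowAux, continuousAt_update_same]
      simpa using riemannZeta_residue_one.pow k
  · exact hne s hs

theorem hasSum_lam (k : ℕ) (w : ℝ) :
    HasSum (fun j => lam k j / j.factorial * w ^ j) (zetaPowAux k (1 + w)).re := by
  have h := hasSum_re (hasSum_taylorSeries_of_entire (differentiable_zetaPowAux k) 1 (1 + w))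
  convert! h using 2 with j
  have hterm : (j.factorial : ℂ)⁻¹ • ((1 + w : ℂ) - 1) ^ j • iteratedDeriv j (zetaPowAux k) 1 =
      ((w ^ j / j.factorial : ℝ) : ℂ) * iteratedDeriv j (zetaPowAux k) 1 := by
    push_cast
    rw [add_sub_cancel_left, smul_eq_mul, smul_eq_mul]
    ring
  rw [hterm, re_ofReal_mul, lam]
  ring

theorem zetaPowAux_re_eq_laplace (k : ℕ) {w : ℝ} (hw : 0 < w) :
    (zetaPowAux k (1 + w)).re =
      w ^ k * ((1 + w) * laplace (expSum ((ζ : ArithmeticFunction ℝ) ^ k)) w) := by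
  have hne : (1 + w : ℂ) ≠ 1 := by simpa using hw.ne'
  have hnonneg := arithmeticFunction_pow_nonneg arithmeticFunction_zeta_nonneg k
  have hL := LSeries_eq_laplace_expSum hnonneg (asympPoly_expSum_zeta_pow k) hw
  simp only [← natCast_dk, ofReal_natCast] at hL
  rw [LSeries_dk k (by simpa using hw)] at hL
  rw [zetaPowAux, Function.update_of_ne hne, mul_pow, hL, add_sub_cancel_left, ← ofReal_pow,
    ← ofReal_mul, ofReal_re]

/-- The alternating partial sums `b n - b (n - 1) + ⋯ ± b 0`, which are the coefficients of
`(∑ b n wⁿ) / (1 + w)`. -/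
def altSum (b : ℕ → ℝ) (n : ℕ) : ℝ :=
  (-1) ^ n * ∑ i ∈ range (n + 1), (-1) ^ i * b i

theorem altSum_succ (b : ℕ → ℝ) (n : ℕ) : altSum b (n + 1) = b (n + 1) - altSum b n := by
  rw [altSum, altSum, sum_range_succ, mul_add, ← mul_assoc _ _ (b (n + 1)), ← mul_pow]
  ring

theorem hasSum_altSum {b : ℕ → ℝ} {w S : ℝ} (hw : |w| < 1)
    (hb : HasSum (fun n => b n * w ^ n) S) :
    HasSum (fun n => altSum b n * w ^ n) (S / (1 + w)) := by
  have hw' : ‖-w‖ < 1 := by rwa [norm_neg]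
  have hprod := hasSum_sum_range_mul_of_summable_norm hb.summable.norm
    (summable_geometric_of_norm_lt_one hw').norm
  rw [hb.tsum_eq, tsum_geometric_of_norm_lt_one hw', sub_neg_eq_add, ← div_eq_mul_inv] at hprod
  convert! hprod using 2 with n
  rw [altSum, mul_sum, sum_mul]
  refine sum_congr rfl fun i hi => ?_
  obtain ⟨d, rfl⟩ := Nat.exists_eq_add_of_le (mem_range_succ_iff.1 hi)
  rw [Nat.add_sub_cancel_left, neg_pow, pow_add, pow_add, mul_mul_mul_comm]
  have hsq : (-1 : ℝ) ^ i * (-1) ^ i = 1 := by rw [← mul_pow]; simp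
  linear_combination b i * w ^ i * (-1) ^ d * w ^ d * hsq

/-- The rescaled error term `e⁻ᵗ Δ_k(eᵗ)`. -/
noncomputable def expDelta (k : ℕ) (t : ℝ) : ℝ := Real.exp (-t) * Deltak k (Real.exp t)

theorem expDelta_eq (k : ℕ) (t : ℝ) :
    expDelta k t = expSum ((ζ : ArithmeticFunction ℝ) ^ k) t -
      ∑ j ∈ range k, aCoef k j / j.factorial * t ^ j := by
  have hone : Real.exp (-t) * Real.exp t = 1 := by rw [← Real.exp_add]; simp
  simp only [expDelta, Deltak, expSum, natCast_dk, Real.log_exp]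
  rw [mul_sub, ← mul_assoc, hone, one_mul]
  rfl

theorem measurable_expDelta (k : ℕ) : Measurable (expDelta k) := by
  have := measurable_expSum ((ζ : ArithmeticFunction ℝ) ^ k)
  simp only [funext (expDelta_eq k)]
  fun_prop

theorem asympPoly_sum_mul_pow (s : Finset ℕ) (c : ℕ → ℝ) :
    AsympPoly fun t => ∑ i ∈ s, c i * t ^ i := by
  simpa [Polynomial.eval_finsetSum] using asympPoly_eval (∑ i ∈ s, Polynomial.monomial i (c i))

theorem asympPoly_expDelta (k : ℕ) : AsympPoly (expDelta k) :=
  ((asympPoly_expSum_zeta_pow k).sub (asympPoly_sum_mul_pow _ _)).congr fun t _ => expDelta_eq k t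

/-- The coefficients of `((s - 1) ζ(s))ᵏ / s` in powers of `s - 1`. -/
noncomputable def zetaCoef (k : ℕ) : ℕ → ℝ :=
  altSum fun i => lam k i / i.factorial

theorem aCoef_eq_zetaCoef (k j : ℕ) : aCoef k j = zetaCoef k (k - 1 - j) := by
  simp only [aCoef, zetaCoef, altSum, mul_div_assoc]

theorem pow_mul_laplace_sum_aCoef (k : ℕ) {w : ℝ} (hw : 0 < w) :
    w ^ k * laplace (fun t => ∑ j ∈ range k, aCoef k j / j.factorial * t ^ j) w =
      ∑ i ∈ range k, zetaCoef k i * w ^ i := by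
  rw [laplace_sum_mul_pow _ _ hw, mul_sum, ← sum_range_reflect]
  refine sum_congr rfl fun i hi => ?_
  have hik : k = i + (k - 1 - i + 1) := by have := mem_range.1 hi; omega
  rw [aCoef_eq_zetaCoef, show k - 1 - (k - 1 - i) = i by omega]
  nth_rw 1 [hik]
  rw [pow_add, inv_pow]
  field_simp

theorem hasSum_laplace_expDelta (k : ℕ) {w : ℝ} (hw : 0 < w) (hw1 : w < 1) :
    HasSum (fun m => zetaCoef k (m + k) * w ^ m) (laplace (expDelta k) w) := by
  have hwk : w ^ k ≠ 0 := (pow_pos hw k).ne'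
  have hZ := (hasSum_nat_add_iff' k).2
    (hasSum_altSum (abs_lt.2 ⟨by linarith, hw1⟩) (hasSum_lam k w))
  have hL : (zetaPowAux k (1 + w)).re / (1 + w) - ∑ i ∈ range k, zetaCoef k i * w ^ i =
      w ^ k * laplace (expDelta k) w := by
    rw [zetaPowAux_re_eq_laplace k hw, ← pow_mul_laplace_sum_aCoef k hw, funext (expDelta_eq k),
      laplace_sub (asympPoly_expSum_zeta_pow k) (asympPoly_sum_mul_pow _ _) (measurable_expSum _)
        (by fun_prop) hw]
    field_simp
  rw [← zetaCoef, hL] at hZ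
  simpa only [pow_add, ← mul_assoc, mul_div_cancel_right₀ _ hwk, mul_div_cancel_left₀ _ hwk] using
    hZ.div_const (w ^ k)

theorem expDecay_expDelta (k : ℕ) : ExpDecay (expDelta k) :=
  (asympPoly_expDelta k).expDecay_of_hasSum_laplace (measurable_expDelta k) one_pos
    fun _ => hasSum_laplace_expDelta k

theorem integral_expDelta_mul_pow (k m : ℕ) :
    (-1) ^ m / m.factorial * ∫ t in Set.Ioi 0, expDelta k t * t ^ m = zetaCoef k (m + k) :=
  (expDecay_expDelta k).integral_mul_pow_eq (measurable_expDelta k) one_pos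
    (fun _ => hasSum_laplace_expDelta k) m

/-! ### The Bessel function `J₀` -/

theorem integral_cos_pow_even (m : ℕ) :
    ∫ θ in 0..π, Real.cos θ ^ (2 * m) = π * ((2 * m).factorial / (4 ^ m * m.factorial ^ 2)) := by
  induction m with
  | zero => simp
  | succ m ih =>
    rw [mul_add_one, integral_cos_pow, ih, Nat.factorial_succ, Nat.factorial_succ,
      Nat.factorial_succ, Real.sin_pi, Real.sin_zero]
    push_cast
    field_simp
    ring

theorem hasSum_integral_cos_mul_cos (u : ℝ) :
    HasSum (fun m : ℕ => ∫ θ in 0..π, (-1) ^ m * (u * Real.cos θ) ^ (2 * m) / (2 * m).factorial)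
      (∫ θ in 0..π, Real.cos (u * Real.cos θ)) := by
  have hsum : Summable fun m : ℕ => |u| ^ (2 * m) / (2 * m).factorial :=
    (Real.summable_pow_div_factorial |u|).comp_injective (mul_right_injective₀ two_ne_zero)
  refine intervalIntegral.hasSum_integral_of_dominated_convergence
    (fun m _ => |u| ^ (2 * m) / (2 * m).factorial) (fun m => ?_)
    (fun m => .of_forall fun θ _ => ?_) (.of_forall fun _ _ => hsum)
    intervalIntegrable_const (.of_forall fun θ _ => Real.hasSum_cos _)
  · exact Continuous.aestronglyMeasurable (by fun_prop)
  · have hcos : |u * Real.cos θ| ≤ |u| := by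
      rw [abs_mul]
      exact mul_le_of_le_one_right (abs_nonneg u) (Real.abs_cos_le_one θ)
    rw [norm_div, norm_mul, norm_pow, norm_pow, norm_neg, norm_one, one_pow, one_mul,
      Real.norm_natCast, Real.norm_eq_abs]
    gcongr

theorem besselJ0_eq_integral (u : ℝ) :
    besselJ0 u = π⁻¹ * ∫ θ in 0..π, Real.cos (u * Real.cos θ) := by
  rw [← (hasSum_integral_cos_mul_cos u).tsum_eq, ← tsum_mul_left]
  refine tsum_congr fun m => ?_
  simp only [mul_pow, mul_div_right_comm, ← mul_assoc]
  rw [intervalIntegral.integral_const_mul, integral_cos_pow_even, div_pow, pow_mul 2]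
  have : ((2 * m).factorial : ℝ) ≠ 0 := by positivity
  field_simp
  norm_num

theorem continuous_besselJ0 : Continuous besselJ0 := by
  rw [funext besselJ0_eq_integral]
  fun_prop

theorem abs_besselJ0_le_one (u : ℝ) : |besselJ0 u| ≤ 1 := by
  have h : ‖∫ θ in 0..π, Real.cos (u * Real.cos θ)‖ ≤ 1 * |π - 0| :=
    intervalIntegral.norm_integral_le_of_norm_le_const fun θ _ => Real.abs_cos_le_one _
  rw [one_mul, sub_zero, abs_of_pos Real.pi_pos, Real.norm_eq_abs] at h
  rw [besselJ0_eq_integral, abs_mul, abs_inv, abs_of_pos Real.pi_pos]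
  exact inv_mul_le_one_of_le₀ h Real.pi_nonneg

theorem tendsto_integral_cos_mul {g : ℝ → ℝ} (hg : Integrable g) :
    Tendsto (fun u => ∫ v, Real.cos (u * v) * g v) atTop (𝓝 0) := by
  have hRL := (Real.tendsto_integral_exp_smul_cocompact fun v => (g v : ℂ)).comp <|
    (tendsto_id.atTop_div_const Real.two_pi_pos).mono_right atTop_le_cocompact
  have hre := (continuous_re.tendsto 0).comp hRL
  refine hre.congr fun u => ?_
  have hint : Integrable fun v => Real.fourierChar (-(v * (u / (2 * π)))) • (g v : ℂ) :=
    (Real.fourierIntegral_convergent_iff' (ContinuousLinearMap.mul ℝ ℝ) _).2 hg.ofReal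
  simp only [Function.comp_apply, id]
  rw [← reCLM_apply, ← reCLM.integral_comp_comm hint]
  refine integral_congr_ae (.of_forall fun v => ?_)
  have harg : 2 * π * -(v * (u / (2 * π))) = -(u * v) := by field_simp
  simp only [reCLM_apply, Circle.smul_def, Real.fourierChar_apply]
  rw [smul_eq_mul, re_mul_ofReal, exp_ofReal_mul_I_re, harg, Real.cos_neg]

theorem tendsto_besselJ0 : Tendsto besselJ0 atTop (𝓝 0) := by
  have hg := Polynomial.Chebyshev.intervalIntegrable_sqrt_one_sub_sq_inv
  rw [intervalIntegrable_iff_integrableOn_Ioc_of_le (by norm_num),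
    ← integrable_indicator_iff measurableSet_Ioc] at hg
  have h := (tendsto_integral_cos_mul hg).const_mul π⁻¹
  rw [mul_zero] at h
  refine h.congr fun u => ?_
  rw [besselJ0_eq_integral, ← Polynomial.Chebyshev.integral_measureT_eq_integral_cos
    (f := fun v => Real.cos (u * v)), Polynomial.Chebyshev.integral_measureT,
    intervalIntegral.integral_of_le (by norm_num), ← integral_indicator measurableSet_Ioc]
  simp only [Set.indicator_mul_right]

theorem besselJ0_two_mul_sqrt {y : ℝ} (hy : 0 ≤ y) :
    besselJ0 (2 * √y) = ∑' m : ℕ, (-1) ^ m / (m.factorial : ℝ) ^ 2 * y ^ m := by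
  refine tsum_congr fun m => ?_
  rw [mul_div_cancel_left₀ _ two_ne_zero, pow_mul, Real.sq_sqrt hy]
  ring

/-! ### The function `φ_k` -/

theorem phik_eq_integral (k : ℕ) (x : ℝ) :
    phik k x = ∫ t in Set.Ioi 0, expDelta k t * besselJ0 (2 * √(x * t)) := by
  rw [phik, show Set.Ioi (1 : ℝ) = Real.exp '' Set.Ioi 0 by simp,
    setIntegral_exp_image measurableSet_Ioi]
  refine setIntegral_congr_fun measurableSet_Ioi fun t _ => ?_
  rw [Real.log_exp, expDelta, Real.exp_neg]
  field_simp

theorem hasSum_phik (k : ℕ) {x : ℝ} (hx : 0 ≤ x) :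
    HasSum (fun m => zetaCoef k (m + k) * (x ^ m / m.factorial)) (phik k x) := by
  obtain ⟨δ, hδ, hO⟩ := expDecay_expDelta k
  have hd : Summable fun m : ℕ =>
      |(-1) ^ m / (m.factorial : ℝ) ^ 2 * x ^ m| * (m.factorial / δ ^ m) := by
    refine (Real.summable_pow_div_factorial (x / δ)).congr fun m => ?_
    rw [abs_mul, abs_div, abs_neg_one_pow, abs_of_nonneg (by positivity),
      abs_of_nonneg (by positivity), div_pow]
    field_simp
  rw [phik_eq_integral]
  convert! hasSum_integral_mul_pow (measurable_expDelta k) hδ hO hd using 1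
  · ext m
    rw [← integral_expDelta_mul_pow]
    field_simp
  · refine setIntegral_congr_fun measurableSet_Ioi fun t ht => ?_
    simp only [besselJ0_two_mul_sqrt (mul_nonneg hx (le_of_lt ht)), mul_pow, mul_assoc]

theorem tendsto_phik (k : ℕ) : Tendsto (phik k) atTop (𝓝 0) := by
  suffices h : Tendsto (fun x => ∫ t in Set.Ioi 0, expDelta k t * besselJ0 (2 * √(x * t))) atTop
      (𝓝 (∫ _ in Set.Ioi (0 : ℝ), 0)) by
    rwa [integral_zero, ← funext (phik_eq_integral k)] at h
  have hm := measurable_expDelta k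
  have hJ := continuous_besselJ0.measurable
  refine tendsto_integral_filter_of_dominated_convergence (fun t => ‖expDelta k t‖)
    (.of_forall fun x => Measurable.aestronglyMeasurable (by fun_prop))
    (.of_forall fun x => .of_forall fun t => ?_)
    ((expDecay_expDelta k).integrableOn_Ioi hm).norm
    ((ae_restrict_iff' measurableSet_Ioi).2 (.of_forall fun t ht => ?_))
  · rw [norm_mul]
    exact mul_le_of_le_one_right (norm_nonneg _) (abs_besselJ0_le_one _)
  · have harg : Tendsto (fun x => 2 * √(x * t)) atTop atTop :=
      (Real.tendsto_sqrt_atTop.comp (tendsto_id.atTop_mul_const ht)).const_mul_atTop two_pos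
    simpa only [mul_zero, Function.comp_def] using
      (tendsto_besselJ0.comp harg).const_mul (expDelta k t)

theorem hasSum_sum_choose_mul_pow_div_factorial {c : ℕ → ℝ} {x : ℝ}
    (hc : Summable fun n => ‖c n * (x ^ n / n.factorial)‖) :
    HasSum (fun n => (∑ j ∈ range (n + 1), (n.choose j : ℝ) * c j) * x ^ n / n.factorial)
      (Real.exp x * ∑' n, c n * (x ^ n / n.factorial)) := by
  have hprod := hasSum_sum_range_mul_of_summable_norm hc (Real.summable_pow_div_factorial x).norm
  rw [← congrFun NormedSpace.exp_eq_tsum_div x, ← Real.exp_eq_exp_ℝ, mul_comm] at hprod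
  convert! hprod using 2 with n
  rw [sum_mul, sum_div]
  refine sum_congr rfl fun j hj => ?_
  obtain ⟨d, rfl⟩ := Nat.exists_eq_add_of_le (mem_range_succ_iff.1 hj)
  rw [Nat.add_sub_cancel_left, Nat.cast_add_choose, pow_add]
  have : ((j + d).factorial : ℝ) ≠ 0 := by positivity
  field_simp

theorem neg_one_pow_mul_ell (k n : ℕ) :
    (-1 : ℝ) ^ n * ell k n =
      ∑ j ∈ range (n + 1), (n.choose j : ℝ) * zetaCoef k (j + k) := by
  cases n with
  | zero => simp [ell, zetaCoef, altSum, mul_div_assoc]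
  | succ n =>
    rw [sum_choose_succ_mul fun j _ => zetaCoef k (j + k), ← sum_add_distrib]
    have hsq : (-1 : ℝ) ^ (n + 1) * (-1 : ℝ) ^ (n + 1) = 1 := by rw [← mul_pow]; simp
    rw [ell, if_pos (by simp), Int.toNat_natCast, ← mul_assoc, hsq, one_mul,
      ← Ico_add_one_right_eq_Icc, sum_Ico_eq_sum_range, Nat.add_sub_cancel]
    refine sum_congr rfl fun j _ => ?_
    rw [add_comm 1 j, ← mul_add, add_right_comm, zetaCoef, altSum_succ,
      add_sub_cancel, mul_div_assoc, Nat.add_sub_cancel, Nat.add_sub_cancel]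

theorem hasSum_neg_one_pow_mul_ell (k : ℕ) (x : ℝ) :
    HasSum (fun n : ℕ => (-1 : ℝ) ^ n * ell k n * x ^ n / n.factorial)
      (Real.exp x * ∑' m, zetaCoef k (m + k) * (x ^ m / m.factorial)) := by
  have hc : Summable fun m => ‖zetaCoef k (m + k) * (x ^ m / m.factorial)‖ := by
    refine (hasSum_phik k (abs_nonneg x)).summable.norm.congr fun m => ?_
    simp
  simpa only [neg_one_pow_mul_ell] using hasSum_sum_choose_mul_pow_div_factorial hc

theorem phik_eq_exp_neg_mul_tsum (k : ℕ) {x : ℝ} (hx : 0 ≤ x) :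
    phik k x = Real.exp (-x) * ∑' n : ℕ, (-1 : ℝ) ^ n * ell k n * x ^ n / n.factorial := by
  rw [(hasSum_neg_one_pow_mul_ell k x).tsum_eq, (hasSum_phik k hx).tsum_eq, ← mul_assoc,
    ← Real.exp_add, neg_add_cancel, Real.exp_zero, one_mul]

theorem stmt15 (k : ℕ) (hk : 0 < k) :
    (∀ x : ℝ, Summable fun n : ℕ => (-1 : ℝ) ^ n * ell k n * x ^ n / (Nat.factorial n)) ∧
    (∀ x : ℝ, 0 ≤ x →
      phik k x = Real.exp (-x) * ∑' n : ℕ, (-1 : ℝ) ^ n * ell k n * x ^ n / (Nat.factorial n)) ∧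
    Tendsto
      (fun x : ℝ => Real.exp (-x) * ∑' n : ℕ, (-1 : ℝ) ^ n * ell k n * x ^ n / (Nat.factorial n))
      atTop (𝓝 0) := by
  have hphi : phik k =ᶠ[atTop] fun x => Real.exp (-x) *
      ∑' n : ℕ, (-1 : ℝ) ^ n * ell k n * x ^ n / (Nat.factorial n) := by
    filter_upwards [eventually_ge_atTop 0] with x hx using phik_eq_exp_neg_mul_tsum k hx
  exact ⟨fun x => (hasSum_neg_one_pow_mul_ell k x).summable,
    fun _ => phik_eq_exp_neg_mul_tsum k, (tendsto_phik k).congr' hphi⟩
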